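/- For every u ∈ LC(ℝⁿ) there exists a sequence u_k of piecewise affine functions in PA(ℝⁿ) that τ-converges to u; moreover the sequence can be chosen so that the Lipschitz constants of the u_k are bounded by the Lipschitz constant of u. -/

import Mathlib

open MeasureTheory Filter Topology Pointwise Asymptotics

noncomputable section

variable {E : Type*} [NormedAddCommGroup E] [NormedSpace ℝ E]

/-- The effective domain of an extended-real-valued function. -/
def edom (u : E → EReal) : Set E := {x | u x < ⊤}

/-- `u` has Lipschitz constant `L` on the interior of its domain. -/
def LipBound (u : E → EReal) (L : ℝ) : Prop :=
  ∀ x ∈ interior (edom u), ∀ y ∈ interior (edom u),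
    |(u x).toReal - (u y).toReal| ≤ L * ‖x - y‖

/-- Membership in `LC`: proper, lower semicontinuous, convex, compact domain,
Lipschitz on the interior of the domain. -/
def IsLC (u : E → EReal) : Prop :=
  (∀ x y : E, ∀ t : ℝ, 0 < t → t < 1 →
      u (t • x + (1 - t) • y) ≤ (t : EReal) * u x + ((1 - t : ℝ) : EReal) * u y) ∧
  LowerSemicontinuous u ∧
  (∀ x, u x ≠ ⊥) ∧
  (∃ x, u x ≠ ⊤) ∧
  IsCompact (edom u) ∧
  (∃ L : ℝ, 0 < L ∧ LipBound u L)

/-- τ-convergence: epi-convergence together with uniformly bounded Lipschitz constants. -/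
def TauConv (uk : ℕ → E → EReal) (u : E → EReal) : Prop :=
  (∀ k, IsLC (uk k)) ∧ IsLC u ∧
  (∀ (x : E) (xk : ℕ → E), Tendsto xk atTop (𝓝 x) →
      u x ≤ liminf (fun k => uk k (xk k)) atTop) ∧
  (∀ x : E, ∃ xk : ℕ → E, Tendsto xk atTop (𝓝 x) ∧
      Tendsto (fun k => uk k (xk k)) atTop (𝓝 (u x))) ∧
  (∃ M : ℝ, 0 < M ∧ ∀ k, LipBound (uk k) M)

/-- Valuation property on `LC`. -/
def IsVal (Z : (E → EReal) → ℝ) : Prop :=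
  ∀ u v : E → EReal, IsLC u → IsLC v → IsLC (fun x => min (u x) (v x)) →
    Z (fun x => min (u x) (v x)) + Z (fun x => max (u x) (v x)) = Z u + Z v

/-- τ-upper semicontinuity. -/
def TauUSC (Z : (E → EReal) → ℝ) : Prop :=
  ∀ (uk : ℕ → E → EReal) (u : E → EReal), TauConv uk u →
    limsup (fun k => Z (uk k)) atTop ≤ Z u

/-- τ-continuity. -/
def TauCont (Z : (E → EReal) → ℝ) : Prop :=
  ∀ (uk : ℕ → E → EReal) (u : E → EReal), TauConv uk u →
    Tendsto (fun k => Z (uk k)) atTop (𝓝 (Z u))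

/-- Translation invariance. -/
def TransInv (Z : (E → EReal) → ℝ) : Prop :=
  ∀ u : E → EReal, IsLC u → ∀ y : E, Z (fun x => u (x - y)) = Z u

/-- Dual epi-translation invariance. -/
def DualTransInv (Z : (E → EReal) → ℝ) : Prop :=
  ∀ u : E → EReal, IsLC u → ∀ (l : E →ₗ[ℝ] ℝ) (c : ℝ),
    Z (fun x => u x + ((l x + c : ℝ) : EReal)) = Z u

/-- SL_n invariance. -/
def SLInv (Z : (E → EReal) → ℝ) : Prop :=
  ∀ u : E → EReal, IsLC u → ∀ φ : E →ₗ[ℝ] E, LinearMap.det φ = 1 →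
    Z (fun x => u (φ x)) = Z u

/-- The class `Conc`. -/
def IsConc (ζ : ℝ → ℝ) : Prop :=
  (∀ t ∈ Set.Ici (0 : ℝ), 0 ≤ ζ t) ∧ ConcaveOn ℝ (Set.Ici 0) ζ ∧
  Tendsto ζ (𝓝[>] 0) (𝓝 0) ∧
  Tendsto (fun t => ζ t / t) atTop (𝓝 0)

open Classical in
/-- `(∞-valued) indicator function` of a set. -/
noncomputable def eIndicator (K : Set E) : E → EReal := fun x =>
  if x ∈ K then (0 : EReal) else ⊤

/-- Real part of an extended-real-valued function. -/
def toRealFn (u : E → EReal) : E → ℝ := fun x => (u x).toReal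

open Classical in
/-- Second derivative of `u`, set to `0` where `u` is not twice differentiable. -/
noncomputable def secondDeriv (u : ℝ → EReal) : ℝ → ℝ := fun x =>
  if DifferentiableAt ℝ (toRealFn u) x ∧ DifferentiableAt ℝ (deriv (toRealFn u)) x
  then deriv (deriv (toRealFn u)) x
  else 0

/-- A polytope: the convex hull of a nonempty finite set of points. -/
def IsPolytope {F : Type*} [AddCommGroup F] [Module ℝ F] (P : Set F) : Prop :=
  ∃ s : Finset F, s.Nonempty ∧ P = convexHull ℝ (s : Set F)

/-- Membership in `PA(ℝⁿ)`: a function of the form `u = min_i (w_i + I_{P_i})` with `w_i`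
affine and `P_i` polytopes with pairwise disjoint interiors whose union is a polytope. -/
def IsPA (u : E → EReal) : Prop :=
  IsLC u ∧
  ∃ (m : ℕ) (w : Fin (m + 1) → E →ₗ[ℝ] ℝ) (b : Fin (m + 1) → ℝ)
    (P : Fin (m + 1) → Set E),
    (∀ i, IsPolytope (P i)) ∧
    (∀ i j, i ≠ j → interior (P i) ∩ interior (P j) = ∅) ∧
    IsPolytope (⋃ i, P i) ∧
    ∀ x, u x = ⨅ i, (((w i x + b i : ℝ) : EReal) + eIndicator (P i) x)

/-!
A convex function that is `L`-Lipschitz on the interior of its compact domain `K` and lower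
semicontinuous is, when `K` has interior points, `L`-Lipschitz on all of `K`, so it extends to a
convex `L`-Lipschitz function on the whole space by infimal convolution with `L * ‖·‖`. That
extension is the supremum of countably many affine functions, and an affine function below an
`L`-Lipschitz function is itself `L`-Lipschitz. Take the maximum of the first `k + 1` of them,
restricted to a polytope containing `K` in its `1 / (k + 1)`-neighbourhood. It is piecewise affine
because the set where one of the affine functions attains the maximum is the polytope cut by
half-spaces, and it stays below `u` while growing to it on `K` and to `+∞` off `K`.

When `K` has empty interior it lies in a hyperplane, and cutting the polytopes with that
hyperplane empties their interiors, so the Lipschitz bound concerns no points; the affine functions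
are then minorants of `u` on `K` with no control on their slopes.
-/

open scoped NNReal

section Polytope

variable {F : Type*} [AddCommGroup F] [Module ℝ F]

/-- The point at which an affine function `f` vanishes on the line through `y` and `z`;
it is only meaningful if `f y ≠ f z`. -/
def crossing (f : F →ᵃ[ℝ] ℝ) (y z : F) : F := (f z - f y)⁻¹ • (f z • y - f y • z)

lemma crossing_comm (f : F →ᵃ[ℝ] ℝ) (y z : F) : crossing f y z = crossing f z y := by
  rw [crossing, crossing, ← neg_sub (f z) (f y), inv_neg, neg_smul, ← smul_neg, neg_sub]

lemma crossing_neg (f : F →ᵃ[ℝ] ℝ) (y z : F) : crossing (-f) y z = crossing f y z := by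
  rw [crossing_comm]
  simp only [crossing, AffineMap.coe_neg, Pi.neg_apply, neg_smul, neg_sub_neg]

lemma crossing_eq_combo (f : F →ᵃ[ℝ] ℝ) (y z : F) :
    crossing f y z = (f z / (f z - f y)) • y + (-f y / (f z - f y)) • z := by
  simp only [crossing, div_eq_inv_mul]
  module

lemma apply_crossing {f : F →ᵃ[ℝ] ℝ} {y z : F} (h : f y < f z) : f (crossing f y z) = 0 := by
  have hd : f z - f y ≠ 0 := (sub_pos.2 h).ne'
  rw [crossing_eq_combo, Convex.combo_affine_apply (by field_simp; ring), smul_eq_mul,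
    smul_eq_mul]
  ring

lemma crossing_mem_segment {f : F →ᵃ[ℝ] ℝ} {y z : F} (hy : f y ≤ 0) (hz : 0 < f z) :
    crossing f y z ∈ segment ℝ y z := by
  have hd : 0 < f z - f y := by linarith
  exact ⟨f z / (f z - f y), -f y / (f z - f y), by positivity,
    div_nonneg (by linarith) hd.le, by field_simp; ring, (crossing_eq_combo f y z).symm⟩

lemma segment_inter_halfSpace_subset {f : F →ᵃ[ℝ] ℝ} {y z : F} (hy : f y ≤ 0) (hz : 0 < f z) :
    segment ℝ y z ∩ {x | f x ≤ 0} ⊆ segment ℝ y (crossing f y z) := by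
  rintro _ ⟨⟨a, b, ha, hb, hab, rfl⟩, hx⟩
  rw [Set.mem_ofPred_eq, Convex.combo_affine_apply hab, smul_eq_mul, smul_eq_mul] at hx
  obtain rfl : a = 1 - b := by linarith
  rcases hy.eq_or_lt with hy | hy
  · have hb : b = 0 := by
      rw [hy] at hx
      nlinarith
    rw [hb, sub_zero, one_smul, zero_smul, add_zero]
    exact left_mem_segment ℝ _ _
  · have hy₀ : f y ≠ 0 := hy.ne
    have hy' : 0 < -f y := by linarith
    have hd : 0 < f z - f y := by linarith
    refine ⟨1 - b * (f z - f y) / -f y, b * (f z - f y) / -f y, ?_, by positivity,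
      sub_add_cancel _ _, ?_⟩
    · rw [sub_nonneg, div_le_one hy']
      linarith
    · rw [crossing_eq_combo]
      match_scalars <;> field_simp
      ring

-- `crossing f y` is a projective map with denominator `f z - f y`, hence preserves convex
-- combinations up to rescaling the weights by that denominator.
lemma convex_setOf_lt_and_crossing_mem {C : Set F} (hC : Convex ℝ C) (f : F →ᵃ[ℝ] ℝ) (y : F) :
    Convex ℝ {z | f y < f z ∧ crossing f y z ∈ C} := by
  rintro z₁ ⟨hz₁, hC₁⟩ z₂ ⟨hz₂, hC₂⟩ a b ha hb hab
  have h₁ : 0 < f z₁ - f y := sub_pos.2 hz₁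
  have h₂ : 0 < f z₂ - f y := sub_pos.2 hz₂
  have hd : a * (f z₁ - f y) + b * (f z₂ - f y) = f (a • z₁ + b • z₂) - f y := by
    rw [Convex.combo_affine_apply hab, smul_eq_mul, smul_eq_mul]
    linear_combination - f y * hab
  have hpos : 0 < a * (f z₁ - f y) + b * (f z₂ - f y) :=
    convex_Ioi (0 : ℝ) h₁ h₂ ha hb hab
  refine ⟨by linarith, ?_⟩
  convert convex_iff_div.1 hC hC₁ hC₂ (mul_nonneg ha h₁.le) (mul_nonneg hb h₂.le) hpos using 1
  rw [← sub_eq_zero, hd, crossing, crossing, crossing]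
  rw [hd] at hpos
  have hf : f (a • z₁ + b • z₂) = a * f z₁ + b * f z₂ := Convex.combo_affine_apply hab
  obtain rfl : a = 1 - b := by linarith
  rw [hf] at hpos ⊢
  match_scalars <;> field_simp <;> ring

lemma crossing_mem_of_mem_convexHull {f : F →ᵃ[ℝ] ℝ} {s t C : Set F} (hC : Convex ℝ C)
    (hs : ∀ p ∈ s, f p ≤ 0) (ht : ∀ q ∈ t, 0 < f q)
    (hst : ∀ p ∈ s, ∀ q ∈ t, crossing f p q ∈ C) {y z : F} (hy : y ∈ convexHull ℝ s)
    (hz : z ∈ convexHull ℝ t) : crossing f y z ∈ C := by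
  have hpz : ∀ p ∈ s, f p < f z ∧ crossing f p z ∈ C := fun p hp => by
    refine convexHull_min (fun q hq => ?_) (convex_setOf_lt_and_crossing_mem hC f p) hz
    exact ⟨(hs p hp).trans_lt (ht q hq), hst p hp q hq⟩
  have hyz : (-f) z < (-f) y ∧ crossing (-f) z y ∈ C := by
    refine convexHull_min (fun p hp => ?_) (convex_setOf_lt_and_crossing_mem hC (-f) z) hy
    rw [Set.mem_ofPred_eq, crossing_neg, crossing_comm]
    exact ⟨neg_lt_neg (hpz p hp).1, (hpz p hp).2⟩
  rw [crossing_neg, crossing_comm] at hyz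
  exact hyz.2

lemma convexHull_inter_halfSpace_subset (f : F →ᵃ[ℝ] ℝ) (s : Set F) :
    convexHull ℝ s ∩ {x | f x ≤ 0} ⊆ convexHull ℝ
      ((s ∩ {x | f x ≤ 0}) ∪ Set.image2 (crossing f) (s ∩ {x | f x ≤ 0}) (s ∩ {x | 0 < f x})) := by
  set s₀ := s ∩ {x | f x ≤ 0}
  set s₁ := s ∩ {x | 0 < f x}
  have hs : s = s₀ ∪ s₁ := by
    rw [← Set.inter_union_distrib_left, Set.left_eq_inter]
    exact fun x _ => le_or_gt (f x) 0
  rcases s₀.eq_empty_or_nonempty with hs₀ | hs₀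
  · rintro x ⟨hxs, hx⟩
    have hsub : s ⊆ {x | 0 < f x} := by
      rw [hs, hs₀, Set.empty_union]
      exact Set.inter_subset_right
    have hpos : 0 < f x :=
      convexHull_min hsub ((convex_Ioi (0 : ℝ)).affine_preimage f) hxs
    exact absurd hx hpos.not_ge
  rcases s₁.eq_empty_or_nonempty with hs₁ | hs₁
  · rw [hs₁, Set.union_empty] at hs
    rw [hs₁, Set.image2_empty_right, Set.union_empty, ← hs]
    exact Set.inter_subset_left
  rintro x ⟨hxs, hx⟩
  rw [hs, convexHull_union hs₀ hs₁, mem_convexJoin] at hxs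
  obtain ⟨y, hy, z, hz, hxyz⟩ := hxs
  have hfy : f y ≤ 0 :=
    convexHull_min Set.inter_subset_right ((convex_Iic (0 : ℝ)).affine_preimage f) hy
  have hfz : 0 < f z :=
    convexHull_min Set.inter_subset_right ((convex_Ioi (0 : ℝ)).affine_preimage f) hz
  have hcross : crossing f y z ∈ convexHull ℝ (s₀ ∪ Set.image2 (crossing f) s₀ s₁) :=
    crossing_mem_of_mem_convexHull (s := s₀) (t := s₁) (convex_convexHull ℝ _)
      (fun p hp => hp.2) (fun q hq => hq.2)
      (fun p hp q hq => subset_convexHull ℝ _ (Or.inr (Set.mem_image2_of_mem hp hq))) hy hz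
  exact (convex_convexHull ℝ _).segment_subset (convexHull_mono Set.subset_union_left hy) hcross
    (segment_inter_halfSpace_subset hfy hfz ⟨hxyz, hx⟩)

lemma convexHull_inter_halfSpace (f : F →ᵃ[ℝ] ℝ) (s : Set F) :
    convexHull ℝ s ∩ {x | f x ≤ 0} = convexHull ℝ
      ((s ∩ {x | f x ≤ 0}) ∪ Set.image2 (crossing f) (s ∩ {x | f x ≤ 0}) (s ∩ {x | 0 < f x})) := by
  refine (convexHull_inter_halfSpace_subset f s).antisymm (convexHull_min ?_
    ((convex_convexHull ℝ s).inter ((convex_Iic (0 : ℝ)).affine_preimage f)))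
  rintro x (hx | ⟨p, ⟨hps, hp⟩, q, ⟨hqs, hq⟩, rfl⟩)
  · exact ⟨subset_convexHull ℝ s hx.1, hx.2⟩
  · exact ⟨segment_subset_convexHull hps hqs (crossing_mem_segment hp hq),
      (apply_crossing (hp.trans_lt hq)).le⟩

namespace IsPolytope

lemma nonempty {P : Set F} (hP : IsPolytope P) : P.Nonempty := by
  obtain ⟨s, hs, rfl⟩ := hP
  exact convexHull_nonempty_iff.2 hs

lemma convex {P : Set F} (hP : IsPolytope P) : Convex ℝ P := by
  obtain ⟨s, -, rfl⟩ := hP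
  exact convex_convexHull ℝ _

lemma of_finite {s : Set F} (hs : s.Finite) (hne : s.Nonempty) : IsPolytope (convexHull ℝ s) :=
  ⟨hs.toFinset, hs.toFinset_nonempty.2 hne, by rw [hs.coe_toFinset]⟩

lemma inter_halfSpace {P : Set F} (hP : IsPolytope P) (f : F →ᵃ[ℝ] ℝ)
    (hne : (P ∩ {x | f x ≤ 0}).Nonempty) : IsPolytope (P ∩ {x | f x ≤ 0}) := by
  obtain ⟨s, -, rfl⟩ := hP
  rw [convexHull_inter_halfSpace] at hne ⊢
  exact of_finite ((s.finite_toSet.inter_of_left _).union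
    ((s.finite_toSet.inter_of_left _).image2 _ (s.finite_toSet.inter_of_left _)))
    (convexHull_nonempty_iff.1 hne)

lemma inter_halfSpaces {ι : Type*} {P : Set F} (hP : IsPolytope P) (A : Finset ι)
    (f : ι → F →ᵃ[ℝ] ℝ) (hne : (P ∩ {x | ∀ i ∈ A, f i x ≤ 0}).Nonempty) :
    IsPolytope (P ∩ {x | ∀ i ∈ A, f i x ≤ 0}) := by
  classical
  induction A using Finset.induction_on with
  | empty => simpa using hP
  | insert i A _ ih =>
    have hsplit : P ∩ {x | ∀ j ∈ insert i A, f j x ≤ 0}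
        = P ∩ {x | ∀ j ∈ A, f j x ≤ 0} ∩ {x | f i x ≤ 0} := by
      ext x
      simp only [Set.mem_inter_iff, Set.mem_ofPred_eq, Finset.forall_mem_insert]
      tauto
    rw [hsplit] at hne ⊢
    exact (ih hne.left).inter_halfSpace (f i) hne

end IsPolytope

end Polytope

section PolytopeTopology

lemma affineMap_eq_of_eqOn {G : Type*} [AddCommGroup G] [Module ℝ G]
    {f g : E →ᵃ[ℝ] G} {s : Set E} (hs : (interior s).Nonempty)
    (hfg : Set.EqOn f g s) : f = g :=
  AffineMap.ext_on (isOpen_interior.affineSpan_eq_top hs) (hfg.mono interior_subset)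

lemma IsPolytope.isCompact {P : Set E} (hP : IsPolytope P) : IsCompact P := by
  obtain ⟨s, -, rfl⟩ := hP
  exact s.finite_toSet.isCompact_convexHull ℝ

lemma exists_affineMap_ne_zero_eqOn_zero [FiniteDimensional ℝ E] {K : Set E} (hc : Convex ℝ K)
    (hne : K.Nonempty) (h_int : interior K = ∅) : ∃ f : E →ᵃ[ℝ] ℝ, f ≠ 0 ∧ Set.EqOn f 0 K := by
  obtain ⟨x₀, hx₀⟩ := hne
  have hx₀' : x₀ ∈ affineSpan ℝ K := subset_affineSpan ℝ K hx₀
  have hdir : (affineSpan ℝ K).direction < ⊤ := by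
    rw [lt_top_iff_ne_top, Ne, AffineSubspace.direction_eq_top_iff_of_nonempty ⟨x₀, hx₀'⟩,
      ← hc.interior_nonempty_iff_affineSpan_eq_top, h_int]
    exact Set.not_nonempty_empty
  obtain ⟨l, hl, hker⟩ := Submodule.exists_le_ker_of_lt_top _ hdir
  refine ⟨l.toAffineMap - AffineMap.const ℝ E (l x₀), fun h => hl ?_, fun x hx => ?_⟩
  · have hlin := congrArg AffineMap.linear h
    simpa using hlin
  · have hxx₀ := hker (AffineSubspace.vsub_mem_direction (subset_affineSpan ℝ K hx) hx₀')
    rw [LinearMap.mem_ker, vsub_eq_sub, map_sub] at hxx₀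
    exact hxx₀

lemma exists_isPolytope_between [FiniteDimensional ℝ E] {K U : Set E} (hc : Convex ℝ K)
    (hne : K.Nonempty) (hK : IsCompact K) (hU : U ∈ 𝓝ˢ K) :
    ∃ P, IsPolytope P ∧ K ⊆ P ∧ P ⊆ U ∧ (interior K = ∅ → interior P = ∅) := by
  obtain ⟨s, hKs, hsU⟩ := hc.exists_subset_interior_convexHull_finset_of_isCompact hK hU
  replace hKs := hKs.trans interior_subset
  have hP : IsPolytope (convexHull ℝ (s : Set E)) :=
    .of_finite s.finite_toSet (convexHull_nonempty_iff.1 (hne.mono hKs))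
  rcases (interior K).eq_empty_or_nonempty with h_int | h_int
  · obtain ⟨f, hf, hfK⟩ := exists_affineMap_ne_zero_eqOn_zero hc hne h_int
    have hK₁ : K ⊆ convexHull ℝ s ∩ {x | f x ≤ 0} := fun x hx => ⟨hKs hx, (hfK hx).le⟩
    have hK₂ : K ⊆ convexHull ℝ s ∩ {x | f x ≤ 0} ∩ {x | (-f) x ≤ 0} := fun x hx =>
      ⟨hK₁ hx, neg_nonpos.2 (hfK hx).ge⟩
    refine ⟨_, (hP.inter_halfSpace f (hne.mono hK₁)).inter_halfSpace (-f) (hne.mono hK₂), hK₂,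
      fun x hx => hsU hx.1.1, fun _ => Set.not_nonempty_iff_eq_empty.1 fun h_int' => hf ?_⟩
    exact affineMap_eq_of_eqOn h_int' fun x hx => le_antisymm hx.1.2 (neg_nonpos.1 hx.2)
  · exact ⟨_, hP, hKs, hsU, fun h => absurd h h_int.ne_empty⟩

end PolytopeTopology

section ExtendTop

variable {X : Type*} {f : X → ℝ} {Q : Set X} {x : X}

/-- The function `f + I_Q`, i.e. `f` on `Q` and `+∞` elsewhere. -/
def extendTop (f : X → ℝ) (Q : Set X) : X → EReal := fun x => (f x : EReal) + eIndicator Q x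

lemma extendTop_of_mem (f : X → ℝ) (hx : x ∈ Q) : extendTop f Q x = f x := by
  simp [extendTop, eIndicator, hx]

lemma extendTop_of_notMem (f : X → ℝ) (hx : x ∉ Q) : extendTop f Q x = ⊤ := by
  simp [extendTop, eIndicator, hx]

lemma le_extendTop_iff {c : EReal} : c ≤ extendTop f Q x ↔ (x ∈ Q → c ≤ f x) := by
  by_cases hx : x ∈ Q
  · simp only [extendTop_of_mem f hx, hx, forall_const]
  · simp only [extendTop_of_notMem f hx, hx, le_top, false_imp_iff]

lemma lt_extendTop_iff {c : EReal} : c < extendTop f Q x ↔ c < ⊤ ∧ (x ∈ Q → c < f x) := by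
  by_cases hx : x ∈ Q
  · rw [extendTop_of_mem f hx]
    exact ⟨fun h => ⟨h.trans (EReal.coe_lt_top _), fun _ => h⟩, fun h => h.2 hx⟩
  · simp [extendTop_of_notMem f hx, hx]

lemma edom_extendTop (f : X → ℝ) (Q : Set X) : edom (extendTop f Q) = Q := by
  ext x
  by_cases hx : x ∈ Q
  · simp [edom, extendTop_of_mem f hx, hx, EReal.coe_lt_top]
  · simp [edom, extendTop_of_notMem f hx, hx]

lemma toRealFn_extendTop_eqOn (f : X → ℝ) (Q : Set X) : Set.EqOn (toRealFn (extendTop f Q)) f Q :=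
  fun x hx => by rw [toRealFn, extendTop_of_mem f hx, EReal.toReal_coe]

lemma extendTop_iUnion_eq_iInf {ι : Type*} {P : ι → Set X} {w : ι → X → ℝ}
    (hw : ∀ i, Set.EqOn f (w i) (P i)) (x : X) :
    extendTop f (⋃ i, P i) x = ⨅ i, ((w i x : EReal) + eIndicator (P i) x) := by
  refine eq_of_forall_le_iff fun c => ?_
  calc c ≤ extendTop f (⋃ i, P i) x
      ↔ ∀ i, x ∈ P i → c ≤ f x := by rw [le_extendTop_iff, Set.mem_iUnion, forall_exists_index]
    _ ↔ ∀ i, x ∈ P i → c ≤ w i x :=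
        forall_congr' fun i => forall_congr' fun hi => by rw [hw i hi]
    _ ↔ c ≤ ⨅ i, ((w i x : EReal) + eIndicator (P i) x) := by
        rw [le_iInf_iff]
        exact forall_congr' fun i => le_extendTop_iff.symm

lemma lowerSemicontinuous_extendTop [TopologicalSpace X] (hf : ContinuousOn f Q) (hQ : IsClosed Q) :
    LowerSemicontinuous (extendTop f Q) := by
  intro x c hc
  obtain ⟨hc_top, hc⟩ := lt_extendTop_iff.1 hc
  suffices h : ∀ᶠ y in 𝓝 x, y ∈ Q → c < f y by
    filter_upwards [h] with y hy using lt_extendTop_iff.2 ⟨hc_top, hy⟩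
  by_cases hx : x ∈ Q
  · rw [← eventually_nhdsWithin_iff]
    exact (continuous_coe_real_ereal.comp_continuousOn hf x hx).eventually_const_lt (hc hx)
  · filter_upwards [hQ.isOpen_compl.mem_nhds hx] with y hy hyQ using absurd hyQ hy

lemma lipBound_iff {F : Type*} [NormedAddCommGroup F] {u : F → EReal} {L : ℝ≥0} :
    LipBound u L ↔ LipschitzOnWith L (toRealFn u) (interior (edom u)) := by
  simp only [LipBound, lipschitzOnWith_iff_dist_le_mul, dist_eq_norm, Real.norm_eq_abs,
    toRealFn]

lemma LipBound.mono {F : Type*} [NormedAddCommGroup F] {u : F → EReal} {L M : ℝ}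
    (h : LipBound u L) (hLM : L ≤ M) : LipBound u M :=
  fun x hx y hy => (h x hx y hy).trans (mul_le_mul_of_nonneg_right hLM (norm_nonneg _))

lemma lipBound_extendTop {F : Type*} [NormedAddCommGroup F] {f : F → ℝ} {Q : Set F} {L : ℝ≥0}
    (hf : LipschitzOnWith L f (interior Q)) :
    LipBound (extendTop f Q) L := by
  rw [lipBound_iff, edom_extendTop]
  refine LipschitzOnWith.of_dist_le_mul fun x hx y hy => ?_
  rw [toRealFn_extendTop_eqOn f Q (interior_subset hx),
    toRealFn_extendTop_eqOn f Q (interior_subset hy)]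
  exact hf.dist_le_mul x hx y hy

lemma extendTop_combo_le {F : Type*} [AddCommGroup F] [Module ℝ F] {f : F → ℝ} {Q : Set F}
    (hf : ConvexOn ℝ Q f) (x y : F) {t : ℝ} (ht₀ : 0 < t) (ht₁ : t < 1) :
    extendTop f Q (t • x + (1 - t) • y)
      ≤ (t : EReal) * extendTop f Q x + ((1 - t : ℝ) : EReal) * extendTop f Q y := by
  have ht₁' : 0 < 1 - t := sub_pos.2 ht₁
  by_cases hx : x ∈ Q
  · by_cases hy : y ∈ Q
    · rw [extendTop_of_mem f hx, extendTop_of_mem f hy,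
        extendTop_of_mem f (hf.1 hx hy ht₀.le ht₁'.le (by ring))]
      exact_mod_cast hf.2 hx hy ht₀.le ht₁'.le (by ring)
    · rw [extendTop_of_mem f hx, extendTop_of_notMem f hy, EReal.coe_mul_top_of_pos ht₁',
        ← EReal.coe_mul, EReal.coe_add_top]
      exact le_top
  · have hne_bot : ((1 - t : ℝ) : EReal) * extendTop f Q y ≠ ⊥ := by
      by_cases hy : y ∈ Q
      · rw [extendTop_of_mem f hy, ← EReal.coe_mul]
        exact EReal.coe_ne_bot _
      · rw [extendTop_of_notMem f hy, EReal.coe_mul_top_of_pos ht₁']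
        exact top_ne_bot
    rw [extendTop_of_notMem f hx, EReal.coe_mul_top_of_pos ht₀, EReal.top_add_of_ne_bot hne_bot]
    exact le_top

lemma isLC_extendTop {f : E → ℝ} {Q : Set E} {L : ℝ≥0} (hf : ConvexOn ℝ Q f)
    (hL : LipschitzOnWith L f Q) (hQ : IsCompact Q) (hne : Q.Nonempty) : IsLC (extendTop f Q) := by
  obtain ⟨x₀, hx₀⟩ := hne
  refine ⟨fun x y t => extendTop_combo_le hf x y,
    lowerSemicontinuous_extendTop hL.continuousOn hQ.isClosed, fun x => ?_, ⟨x₀, ?_⟩, ?_,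
    L + 1, by positivity, ?_⟩
  · exact (lt_extendTop_iff.2 ⟨bot_lt_top, fun _ => EReal.bot_lt_coe _⟩).ne'
  · simp only [extendTop_of_mem f hx₀, ne_eq, EReal.coe_ne_top, not_false_eq_true]
  · rwa [edom_extendTop]
  · exact (lipBound_extendTop (hL.mono interior_subset)).mono (by linarith)

end ExtendTop

section MaxAffine

lemma lipschitzWith_finset_sup' {X ι : Type*} [PseudoEMetricSpace X] {C : ℝ≥0} {s : Finset ι}
    (hs : s.Nonempty) {g : ι → X → ℝ} (hg : ∀ i ∈ s, LipschitzWith C (g i)) :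
    LipschitzWith C (s.sup' hs g) :=
  Finset.sup'_induction hs g (fun _ hf _ hh => max_self C ▸ hf.max hh) hg

lemma convexOn_finset_sup' {F ι : Type*} [AddCommGroup F] [Module ℝ F] {K : Set F} {s : Finset ι}
    (hs : s.Nonempty) {g : ι → F → ℝ} (hg : ∀ i ∈ s, ConvexOn ℝ K (g i)) :
    ConvexOn ℝ K (s.sup' hs g) :=
  Finset.sup'_induction hs g (fun _ hf _ hh => hf.sup hh) hg

lemma convexOn_affineMap {F : Type*} [AddCommGroup F] [Module ℝ F] (f : F →ᵃ[ℝ] ℝ) {K : Set F}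
    (hK : Convex ℝ K) : ConvexOn ℝ K f :=
  ((convexOn_id convex_univ).comp_affineMap f).subset (Set.subset_univ K) hK

lemma lipschitzWith_continuousAffineMap {F : Type*} [NormedAddCommGroup F] [NormedSpace ℝ F]
    (a : F →ᴬ[ℝ] ℝ) : LipschitzWith ‖a.contLinear‖₊ a := by
  refine LipschitzWith.of_dist_le_mul fun x y => ?_
  rw [dist_eq_norm, dist_eq_norm, ← vsub_eq_sub, ← vsub_eq_sub, ← a.contLinear_map_vsub]
  exact a.contLinear.le_opNorm _

lemma isPA_of_finite {ι : Type*} [Finite ι] [Nonempty ι] {u : E → EReal} (hu : IsLC u)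
    (w : ι → E →ᵃ[ℝ] ℝ) {P : ι → Set E} (hP : ∀ i, IsPolytope (P i))
    (hdisj : Pairwise fun i j => interior (P i) ∩ interior (P j) = ∅)
    (hunion : IsPolytope (⋃ i, P i))
    (hinf : ∀ x, u x = ⨅ i, ((w i x : EReal) + eIndicator (P i) x)) : IsPA u := by
  obtain ⟨n, ⟨e⟩⟩ := Finite.exists_equiv_fin ι
  obtain ⟨m, rfl⟩ := Nat.exists_eq_succ_of_ne_zero
    (Fin.pos_iff_nonempty.2 (e.nonempty_congr.1 inferInstance)).ne'
  refine ⟨hu, m, fun i => (w (e.symm i)).linear, fun i => w (e.symm i) 0, fun i => P (e.symm i),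
    fun i => hP _, fun i j hij => hdisj (e.symm.injective.ne hij), ?_, fun x => ?_⟩
  · rwa [e.symm.surjective.iUnion_comp P]
  · have hdecomp : ∀ i, w i x = (w i).linear x + w i 0 := fun i => congrFun (w i).decomp x
    simp_rw [hinf, ← hdecomp]
    exact (e.symm.surjective.iInf_comp fun i => (w i x : EReal) + eIndicator (P i) x).symm

/-- The part of `Q` on which `a` is maximal among the functions in `A`. -/
def maxCell (A : Finset (E →ᴬ[ℝ] ℝ)) (Q : Set E) (a : E →ᴬ[ℝ] ℝ) : Set E :=
  {x ∈ Q | ∀ c ∈ A, c x ≤ a x}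

variable {A : Finset (E →ᴬ[ℝ] ℝ)} {Q : Set E} {a b : E →ᴬ[ℝ] ℝ}

lemma isPolytope_maxCell (hQ : IsPolytope Q) (hne : (maxCell A Q a).Nonempty) :
    IsPolytope (maxCell A Q a) := by
  have hcell : maxCell A Q a =
      Q ∩ {x | ∀ c ∈ A, ((c - a : E →ᴬ[ℝ] ℝ) : E →ᵃ[ℝ] ℝ) x ≤ 0} := by
    ext x
    simp [maxCell]
  rw [hcell] at hne ⊢
  exact hQ.inter_halfSpaces A _ hne

lemma interior_maxCell_inter_interior_maxCell (ha : a ∈ A) (hb : b ∈ A) (hab : a ≠ b) :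
    interior (maxCell A Q a) ∩ interior (maxCell A Q b) = ∅ := by
  by_contra hne
  rw [← interior_inter, ← Ne, ← Set.nonempty_iff_ne_empty] at hne
  refine hab (ContinuousAffineMap.toAffineMap_injective (affineMap_eq_of_eqOn hne fun x hx => ?_))
  exact le_antisymm (hx.2.2 a ha) (hx.1.2 b hb)

lemma iUnion_maxCell (hA : A.Nonempty) (Q : Set E) :
    ⋃ a : {a // a ∈ A ∧ (maxCell A Q a).Nonempty}, maxCell A Q a = Q := by
  refine (Set.iUnion_subset fun a x hx => hx.1).antisymm fun x hx => ?_
  obtain ⟨a, ha, hmax⟩ := A.exists_max_image (fun a => a x) hA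
  exact Set.mem_iUnion.2 ⟨⟨a, ha, x, hx, hmax⟩, hx, hmax⟩

lemma sup'_eqOn_maxCell (hA : A.Nonempty) (ha : a ∈ A) :
    Set.EqOn (A.sup' hA (fun a => ⇑a)) a (maxCell A Q a) := fun x hx => by
  rw [Finset.sup'_apply]
  exact le_antisymm (Finset.sup'_le hA _ hx.2) (Finset.le_sup' (fun a => a x) ha)

lemma isLC_extendTop_sup' (hA : A.Nonempty) (hQ : IsPolytope Q) :
    IsLC (extendTop (A.sup' hA (fun a => ⇑a)) Q) := by
  refine isLC_extendTop (L := A.sup' hA fun a => ‖a.contLinear‖₊)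
    (convexOn_finset_sup' hA fun a _ => convexOn_affineMap a.toAffineMap hQ.convex)
    (lipschitzWith_finset_sup' hA fun a ha => ?_).lipschitzOnWith hQ.isCompact hQ.nonempty
  exact (lipschitzWith_continuousAffineMap a).weaken
    (Finset.le_sup' (fun a : E →ᴬ[ℝ] ℝ => ‖a.contLinear‖₊) ha)

lemma isPA_extendTop_sup' (hA : A.Nonempty) (hQ : IsPolytope Q) :
    IsPA (extendTop (A.sup' hA (fun a => ⇑a)) Q) := by
  have hunion := iUnion_maxCell hA Q
  have hfin : Finite {a // a ∈ A ∧ (maxCell A Q a).Nonempty} :=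
    (A.finite_toSet.subset fun a ha => ha.1).to_subtype
  have hne : Nonempty {a // a ∈ A ∧ (maxCell A Q a).Nonempty} := by
    rw [← hunion] at hQ
    exact Set.nonempty_of_nonempty_iUnion hQ.nonempty
  refine isPA_of_finite (isLC_extendTop_sup' hA hQ) (fun a => (a.1 : E →ᵃ[ℝ] ℝ))
    (fun a => isPolytope_maxCell hQ a.2.2) (fun a b hab => ?_) (hunion.symm ▸ hQ) fun x => ?_
  · exact interior_maxCell_inter_interior_maxCell a.2.1 b.2.1 (Subtype.coe_ne_coe.2 hab)
  · have h := extendTop_iUnion_eq_iInf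
      (fun a : {a // a ∈ A ∧ (maxCell A Q a).Nonempty} => sup'_eqOn_maxCell (Q := Q) hA a.2.1) x
    rwa [hunion] at h

end MaxAffine

section LipschitzConvex

lemma le_of_lowerSemicontinuousWithinAt_of_tendsto {X T : Type*} [TopologicalSpace X]
    {v : X → ℝ} {K : Set X} {x : X} (hv : LowerSemicontinuousWithinAt v K x) {l : Filter T}
    [l.NeBot] {γ : T → X} (hγ : Tendsto γ l (𝓝[K] x)) {g : T → ℝ} {b : ℝ}
    (hg : Tendsto g l (𝓝 b)) (hvg : ∀ᶠ t in l, v (γ t) ≤ g t) : v x ≤ b := by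
  refine le_of_forall_lt_imp_le_of_dense fun c hc => ge_of_tendsto hg ?_
  filter_upwards [hγ.eventually (hv c hc), hvg] with t ht ht' using ht.le.trans ht'

lemma le_combo_add_of_lipschitzOnWith_interior {K : Set E} {v : E → ℝ} {L : ℝ≥0}
    (hv : ConvexOn ℝ K v) (hL : LipschitzOnWith L v (interior K)) {x y z : E} (hx : x ∈ K)
    (hy : y ∈ K) (hz : z ∈ interior K) {t : ℝ} (ht₀ : 0 < t) (ht₁ : t ≤ 1) :
    v ((1 - t) • x + t • z) ≤ (1 - t) * v y + t * v z + L * ((1 - t) * dist x y) := by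
  have ht₁' : 0 ≤ 1 - t := sub_nonneg.2 ht₁
  have hmem : ∀ p ∈ K, (1 - t) • p + t • z ∈ interior K := fun p hp =>
    hv.1.combo_self_interior_mem_interior hp hz ht₁' ht₀ (sub_add_cancel 1 t)
  calc v ((1 - t) • x + t • z)
      ≤ v ((1 - t) • y + t • z) + L * dist ((1 - t) • x + t • z) ((1 - t) • y + t • z) :=
        hL.le_add_mul (hmem x hx) (hmem y hy)
    _ = v ((1 - t) • y + t • z) + L * ((1 - t) * dist x y) := by
        rw [dist_add_right, dist_smul₀, Real.norm_of_nonneg ht₁']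
    _ ≤ (1 - t) * v y + t * v z + L * ((1 - t) * dist x y) := by
        gcongr
        exact hv.2 hy (interior_subset hz) ht₁' ht₀.le (sub_add_cancel 1 t)

lemma lipschitzOnWith_of_interior {K : Set E} {v : E → ℝ} {L : ℝ≥0} (hv : ConvexOn ℝ K v)
    (hlsc : LowerSemicontinuousOn v K) (hne : (interior K).Nonempty)
    (hL : LipschitzOnWith L v (interior K)) : LipschitzOnWith L v K := by
  obtain ⟨z, hz⟩ := hne
  refine LipschitzOnWith.of_le_add_mul L fun x hx y hy => ?_
  have hunit : Set.Ioc (0 : ℝ) 1 ∈ 𝓝[>] 0 := Ioc_mem_nhdsGT one_pos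
  have hγ : Tendsto (fun t : ℝ => (1 - t) • x + t • z) (𝓝[>] 0) (𝓝[K] x) := by
    refine tendsto_nhdsWithin_iff.2 ⟨tendsto_nhdsWithin_of_tendsto_nhds ?_, ?_⟩
    · exact Continuous.tendsto' (by fun_prop) _ _ (by simp)
    · filter_upwards [hunit] with t ht
      exact hv.1 hx (interior_subset hz) (sub_nonneg.2 ht.2) ht.1.le (sub_add_cancel 1 t)
  refine le_of_lowerSemicontinuousWithinAt_of_tendsto (hlsc x hx) hγ
    (g := fun t => (1 - t) * v y + t * v z + L * ((1 - t) * dist x y))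
    (tendsto_nhdsWithin_of_tendsto_nhds (Continuous.tendsto' (by fun_prop) _ _ (by simp))) ?_
  filter_upwards [hunit] with t ht
  exact le_combo_add_of_lipschitzOnWith_interior hv hL hx hy hz ht.1 ht.2

end LipschitzConvex

namespace IsLC

variable {u : E → EReal}

lemma coe_toRealFn (hu : IsLC u) {x : E} (hx : x ∈ edom u) : (toRealFn u x : EReal) = u x :=
  EReal.coe_toReal hx.ne (hu.2.2.1 x)

lemma nonempty_edom (hu : IsLC u) : (edom u).Nonempty := by
  obtain ⟨x, hx⟩ := hu.2.2.2.1
  exact ⟨x, hx.lt_top⟩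

lemma isCompact_edom (hu : IsLC u) : IsCompact (edom u) := hu.2.2.2.2.1

lemma convexOn_toRealFn (hu : IsLC u) : ConvexOn ℝ (edom u) (toRealFn u) := by
  have hcombo : ∀ ⦃x⦄, x ∈ edom u → ∀ ⦃y⦄, y ∈ edom u → ∀ ⦃a b : ℝ⦄, 0 < a → 0 < b → a + b = 1 →
      u (a • x + b • y) ≤ ((a * toRealFn u x + b * toRealFn u y : ℝ) : EReal) := by
    intro x hx y hy a b ha hb hab
    obtain rfl : b = 1 - a := by linarith
    simpa only [EReal.coe_add, EReal.coe_mul, hu.coe_toRealFn hx, hu.coe_toRealFn hy]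
      using hu.1 x y a ha (by linarith)
  have hconv : Convex ℝ (edom u) := convex_iff_forall_pos.2 fun x hx y hy a b ha hb hab =>
    (hcombo hx hy ha hb hab).trans_lt (EReal.coe_lt_top _)
  refine convexOn_iff_forall_pos.2 ⟨hconv, fun x hx y hy a b ha hb hab => ?_⟩
  have h := hcombo hx hy ha hb hab
  rwa [← hu.coe_toRealFn (hconv hx hy ha.le hb.le hab), EReal.coe_le_coe_iff] at h

lemma lowerSemicontinuousOn_toRealFn (hu : IsLC u) :
    LowerSemicontinuousOn (toRealFn u) (edom u) := by
  intro x hx c hc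
  rw [gt_iff_lt, ← EReal.coe_lt_coe_iff, hu.coe_toRealFn hx] at hc
  filter_upwards [mem_nhdsWithin_of_mem_nhds (hu.2.1 x _ hc), self_mem_nhdsWithin] with y hy hyK
  rwa [gt_iff_lt, ← hu.coe_toRealFn hyK, EReal.coe_lt_coe_iff] at hy

lemma lipschitzOnWith_toRealFn (hu : IsLC u) {L : ℝ≥0} (hL : LipBound u L)
    (hne : (interior (edom u)).Nonempty) : LipschitzOnWith L (toRealFn u) (edom u) :=
  lipschitzOnWith_of_interior hu.convexOn_toRealFn hu.lowerSemicontinuousOn_toRealFn hne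
    (lipBound_iff.1 hL)

end IsLC

section AffineMinorants

/-- The largest `L`-Lipschitz function below `v` on `K`, i.e. the infimal convolution of `v + I_K`
with `L * ‖·‖`; unless `v` is `L`-Lipschitz on `K`, the infimum may be unbounded below. -/
def lipschitzEnvelope {X : Type*} [PseudoMetricSpace X] (v : X → ℝ) (K : Set X) (L : ℝ≥0)
    (y : X) : ℝ :=
  ⨅ x : K, (v x + L * dist y x)

section Metric

variable {X : Type*} [PseudoMetricSpace X] {v : X → ℝ} {K : Set X} {L : ℝ≥0}

lemma bddBelow_range_lipschitzEnvelope (hv : LipschitzOnWith L v K) (y : X) :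
    BddBelow (Set.range fun x : K => v x + L * dist y x) := by
  rcases K.eq_empty_or_nonempty with rfl | ⟨x₀, hx₀⟩
  · exact (Set.finite_range _).bddBelow
  · refine ⟨v x₀ - L * dist x₀ y, Set.forall_mem_range.2 fun x => ?_⟩
    have htri : (L : ℝ) * dist x₀ x ≤ L * (dist x₀ y + dist y x) :=
      mul_le_mul_of_nonneg_left (dist_triangle _ _ _) L.2
    linarith [hv.le_add_mul hx₀ x.2]

lemma lipschitzEnvelope_le (hv : LipschitzOnWith L v K) (y : X) {x : X} (hx : x ∈ K) :
    lipschitzEnvelope v K L y ≤ v x + L * dist y x :=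
  ciInf_le (bddBelow_range_lipschitzEnvelope hv y) ⟨x, hx⟩

lemma lipschitzEnvelope_eqOn (hv : LipschitzOnWith L v K) :
    Set.EqOn (lipschitzEnvelope v K L) v K := fun x hx => by
  have : Nonempty K := ⟨⟨x, hx⟩⟩
  refine le_antisymm ?_ (le_ciInf fun y => hv.le_add_mul hx y.2)
  simpa only [dist_self, mul_zero, add_zero] using lipschitzEnvelope_le hv x hx

lemma lipschitzWith_lipschitzEnvelope (hv : LipschitzOnWith L v K) (hne : K.Nonempty) :
    LipschitzWith L (lipschitzEnvelope v K L) := by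
  have : Nonempty K := hne.to_subtype
  refine LipschitzWith.of_le_add_mul L fun y z => sub_le_iff_le_add.1 (le_ciInf fun x => ?_)
  have htri : (L : ℝ) * dist y x ≤ L * (dist y z + dist z x) :=
    mul_le_mul_of_nonneg_left (dist_triangle _ _ _) L.2
  linarith [lipschitzEnvelope_le hv y x.2]

end Metric

lemma convexOn_lipschitzEnvelope {v : E → ℝ} {K : Set E} {L : ℝ≥0} (hconv : ConvexOn ℝ K v)
    (hv : LipschitzOnWith L v K) (hne : K.Nonempty) :
    ConvexOn ℝ Set.univ (lipschitzEnvelope v K L) := by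
  have : Nonempty K := hne.to_subtype
  refine ⟨convex_univ, fun y _ z _ a b ha hb hab => ?_⟩
  rw [smul_eq_mul, smul_eq_mul, lipschitzEnvelope.eq_def v K L y, lipschitzEnvelope.eq_def v K L z,
    Real.mul_iInf_of_nonneg ha, Real.mul_iInf_of_nonneg hb]
  refine le_ciInf_add_ciInf fun p q => ?_
  have hdist : dist (a • y + b • z) (a • (p : E) + b • (q : E)) ≤ a * dist y p + b * dist z q := by
    refine (dist_add_add_le _ _ _ _).trans_eq ?_
    rw [dist_smul₀, dist_smul₀, Real.norm_of_nonneg ha, Real.norm_of_nonneg hb]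
  calc lipschitzEnvelope v K L (a • y + b • z)
      ≤ v (a • (p : E) + b • (q : E)) + L * dist (a • y + b • z) (a • (p : E) + b • (q : E)) :=
        lipschitzEnvelope_le hv _ (hconv.1 p.2 q.2 ha hb hab)
    _ ≤ (a * v p + b * v q) + L * (a * dist y p + b * dist z q) := by
        gcongr
        exact hconv.2 p.2 q.2 ha hb hab
    _ = a * (v p + L * dist y p) + b * (v q + L * dist z q) := by ring

lemma lipschitzWith_of_affineMap_le {a : E →ᵃ[ℝ] ℝ} {g : E → ℝ} {L : ℝ≥0} (hg : LipschitzWith L g)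
    (hag : ∀ x, a x ≤ g x) : LipschitzWith L a := by
  refine LipschitzWith.of_le_add_mul L fun x y => ?_
  by_contra! hlt
  obtain ⟨n, hn⟩ := exists_lt_nsmul (sub_pos.2 hlt) (g y - a y)
  have ha : a (y + (n : ℝ) • (x - y)) = a y + n * (a x - a y) := by
    rw [add_comm y, ← vadd_eq_add, a.map_vadd, map_smul, ← vsub_eq_sub x y, a.linearMap_vsub,
      vsub_eq_sub, vadd_eq_add, smul_eq_mul, add_comm]
  have hdist : dist (y + (n : ℝ) • (x - y)) y = n * dist x y := by
    rw [dist_self_add_left, norm_smul, Real.norm_natCast, dist_eq_norm]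
  have hgle := hg.le_add_mul (y + (n : ℝ) • (x - y)) y
  have hage := hag (y + (n : ℝ) • (x - y))
  rw [hdist] at hgle
  rw [ha] at hage
  rw [nsmul_eq_mul] at hn
  linarith

lemma exists_seq_affine_le_of_lowerSemicontinuousOn [HereditarilyLindelofSpace E] {v : E → ℝ}
    {K : Set E} (hconv : ConvexOn ℝ K v) (hlsc : LowerSemicontinuousOn v K)
    (hK : IsClosed K) :
    ∃ a : ℕ → E →ᴬ[ℝ] ℝ, (∀ n, ∀ x ∈ K, a n x ≤ v x) ∧ ∀ x ∈ K, ∀ t < v x, ∃ n, t < a n x := by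
  obtain ⟨l, c, hle, hsup⟩ := hconv.real_sSup_of_nat_affine_eq hK hlsc
  refine ⟨fun n => (l n).toContinuousAffineMap + ContinuousAffineMap.const ℝ E (c n),
    fun n x hx => hle n ⟨x, hx⟩, fun x hx t ht => ?_⟩
  have hx_sup := congrFun hsup ⟨x, hx⟩
  rw [iSup_apply] at hx_sup
  exact exists_lt_of_lt_ciSup (hx_sup ▸ ht)

lemma exists_seq_affine_le_of_lipschitzOnWith [HereditarilyLindelofSpace E] {v : E → ℝ} {K : Set E}
    {L : ℝ≥0} (hconv : ConvexOn ℝ K v) (hv : LipschitzOnWith L v K) (hne : K.Nonempty) :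
    ∃ a : ℕ → E →ᴬ[ℝ] ℝ, (∀ n, LipschitzWith L (a n)) ∧ (∀ n, ∀ x ∈ K, a n x ≤ v x) ∧
      ∀ x ∈ K, ∀ t < v x, ∃ n, t < a n x := by
  have hlip := lipschitzWith_lipschitzEnvelope hv hne
  have heq := lipschitzEnvelope_eqOn hv
  obtain ⟨a, hle, hlt⟩ := exists_seq_affine_le_of_lowerSemicontinuousOn
    (convexOn_lipschitzEnvelope hconv hv hne)
    (hlip.continuous.lowerSemicontinuous.lowerSemicontinuousOn _) isClosed_univ
  exact ⟨a, fun n => lipschitzWith_of_affineMap_le (a := a n) hlip fun x => hle n x trivial,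
    fun n x hx => heq hx ▸ hle n x trivial, fun x hx t ht => hlt x trivial t (heq hx ▸ ht)⟩

lemma IsLC.exists_seq_affine_le [HereditarilyLindelofSpace E] {u : E → EReal} (hu : IsLC u)
    {L : ℝ≥0} (hL : LipBound u L) :
    ∃ a : ℕ → E →ᴬ[ℝ] ℝ, ((interior (edom u)).Nonempty → ∀ n, LipschitzWith L (a n)) ∧
      (∀ n x, a n x ≤ u x) ∧ ∀ x ∈ edom u, ∀ c < u x, ∃ n, c < a n x := by
  obtain ⟨a, haL, hle, hlt⟩ : ∃ a : ℕ → E →ᴬ[ℝ] ℝ,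
      ((interior (edom u)).Nonempty → ∀ n, LipschitzWith L (a n)) ∧
      (∀ n, ∀ x ∈ edom u, a n x ≤ toRealFn u x) ∧
      ∀ x ∈ edom u, ∀ t < toRealFn u x, ∃ n, t < a n x := by
    rcases (interior (edom u)).eq_empty_or_nonempty with h_int | h_int
    · obtain ⟨a, ha⟩ := exists_seq_affine_le_of_lowerSemicontinuousOn hu.convexOn_toRealFn
        hu.lowerSemicontinuousOn_toRealFn hu.isCompact_edom.isClosed
      exact ⟨a, fun h => absurd h_int h.ne_empty, ha⟩
    · obtain ⟨a, hLa, ha⟩ := exists_seq_affine_le_of_lipschitzOnWith hu.convexOn_toRealFn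
        (hu.lipschitzOnWith_toRealFn hL h_int) hu.nonempty_edom
      exact ⟨a, fun _ => hLa, ha⟩
  refine ⟨a, haL, fun n x => ?_, fun x hx c hc => ?_⟩
  · by_cases hx : x ∈ edom u
    · exact hu.coe_toRealFn hx ▸ EReal.coe_le_coe_iff.2 (hle n x hx)
    · exact le_top.trans (not_lt.1 hx)
  · obtain ⟨t, hct, htu⟩ := EReal.lt_iff_exists_real_btwn.1 hc
    rw [← hu.coe_toRealFn hx, EReal.coe_lt_coe_iff] at htu
    obtain ⟨n, hn⟩ := hlt x hx t htu
    exact ⟨n, hct.trans (EReal.coe_lt_coe_iff.2 hn)⟩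

end AffineMinorants

section Approximation

lemma tauConv_of_le_of_eventually_lt {uk : ℕ → E → EReal} {u : E → EReal} {M : ℝ}
    (huk : ∀ k, IsLC (uk k)) (hu : IsLC u) (hM : 0 < M) (hLip : ∀ k, LipBound (uk k) M)
    (hle : ∀ k x, uk k x ≤ u x)
    (hlt : ∀ (x : E) (xk : ℕ → E), Tendsto xk atTop (𝓝 x) → ∀ c < u x, ∀ᶠ k in atTop,
      c < uk k (xk k)) : TauConv uk u := by
  refine ⟨huk, hu, fun x xk hxk => ?_, fun x => ⟨fun _ => x, tendsto_const_nhds, ?_⟩, M, hM, hLip⟩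
  · exact le_of_forall_lt_imp_le_of_dense fun c hc => le_liminf_of_le (by isBoundedDefault)
      ((hlt x xk hxk c hc).mono fun _ => le_of_lt)
  · exact tendsto_order.2 ⟨hlt x _ tendsto_const_nhds,
      fun c hc => Eventually.of_forall fun k => (hle k x).trans_lt hc⟩

lemma exists_seq_isPolytope_tendsto_smallSets [FiniteDimensional ℝ E] {K : Set E}
    (hc : Convex ℝ K) (hne : K.Nonempty) (hK : IsCompact K) :
    ∃ Q : ℕ → Set E, (∀ k, IsPolytope (Q k)) ∧ (∀ k, K ⊆ Q k) ∧
      Tendsto Q atTop (𝓝ˢ K).smallSets ∧ (interior K = ∅ → ∀ k, interior (Q k) = ∅) := by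
  choose Q hpoly hKQ hQ h_int using fun k : ℕ => exists_isPolytope_between hc hne hK
    (Metric.thickening_mem_nhdsSet K (Nat.one_div_pos_of_nat (n := k) (α := ℝ)))
  refine ⟨Q, hpoly, hKQ, tendsto_smallSets_iff.2 fun U hU => ?_, fun h k => h_int k h⟩
  obtain ⟨δ, hδ, hδU⟩ := (Metric.hasBasis_nhdsSet_thickening hK).mem_iff.1 hU
  filter_upwards [tendsto_one_div_add_atTop_nhds_zero_nat.eventually_lt_const hδ] with k hk
  exact (hQ k).trans ((Metric.thickening_mono hk.le K).trans hδU)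

lemma isPA_extendTop_partialSups (a : ℕ → E →ᴬ[ℝ] ℝ) {Q : Set E} (hQ : IsPolytope Q) (k : ℕ) :
    IsPA (extendTop (partialSups (fun n => ⇑(a n)) k) Q) := by
  classical
  have h := isPA_extendTop_sup' (A := (Finset.Iic k).image a) (by simp) hQ
  rwa [Finset.sup'_image] at h

lemma eventually_lt_extendTop_partialSups {X : Type*} [TopologicalSpace X] [T2Space X]
    {K : Set X} (hK : IsCompact K) {Q : ℕ → Set X} (hQ : Tendsto Q atTop (𝓝ˢ K).smallSets)
    {a : ℕ → X → ℝ} (ha : ∀ n, Continuous (a n)) {x : X} {xk : ℕ → X}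
    (hxk : Tendsto xk atTop (𝓝 x)) {c : EReal} (hc : c < ⊤) (hlt : x ∈ K → ∃ n, c < a n x) :
    ∀ᶠ k in atTop, c < extendTop (partialSups a k) (Q k) (xk k) := by
  suffices h : ∀ᶠ k in atTop, xk k ∈ Q k → c < (partialSups a k (xk k) : ℝ) by
    filter_upwards [h] with k hk using lt_extendTop_iff.2 ⟨hc, hk⟩
  by_cases hx : x ∈ K
  · obtain ⟨n, hn⟩ := hlt hx
    have hcont : Continuous fun y => (a n y : EReal) := continuous_coe_real_ereal.comp (ha n)
    filter_upwards [(hcont.tendsto x).comp hxk |>.eventually_const_lt hn, eventually_ge_atTop n]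
      with k hk hnk _
    exact hk.trans_le (EReal.coe_le_coe_iff.2 (le_partialSups_of_le a hnk (xk k)))
  · obtain ⟨U, hU, V, hV, hUV⟩ := Filter.disjoint_iff.1 (hK.disjoint_nhdsSet_nhds hx)
    filter_upwards [tendsto_smallSets_iff.1 hQ U hU, hxk.eventually hV] with k hkU hkV hkQ
    exact absurd hkV (hUV.notMem_of_mem_left (hkU hkQ))

lemma extendTop_partialSups_le {X : Type*} {u : X → EReal} {a : ℕ → X → ℝ} {Q : Set X}
    (hQ : edom u ⊆ Q) (ha : ∀ n x, a n x ≤ u x) (k : ℕ) (x : X) :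
    extendTop (partialSups a k) Q x ≤ u x := by
  by_cases hx : x ∈ edom u
  · obtain ⟨n, -, hn⟩ := (Finset.Iic k).exists_mem_eq_sup' Finset.nonempty_Iic fun n => a n x
    rw [extendTop_of_mem _ (hQ hx), partialSups_apply, Finset.sup'_apply, hn]
    exact ha n x
  · exact le_top.trans (not_lt.1 hx)

lemma lipBound_extendTop_partialSups {F : Type*} [NormedAddCommGroup F] {a : ℕ → F → ℝ}
    {Q : Set F} {L : ℝ≥0} (ha : (interior Q).Nonempty → ∀ n, LipschitzWith L (a n)) (k : ℕ) :
    LipBound (extendTop (partialSups a k) Q) L := by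
  refine lipBound_extendTop ?_
  rcases (interior Q).eq_empty_or_nonempty with hempty | hne
  · simp only [hempty, lipschitzOnWith_empty]
  · rw [partialSups_apply]
    exact (lipschitzWith_finset_sup' _ fun n _ => ha hne n).lipschitzOnWith

theorem stmt9_general [FiniteDimensional ℝ E] {u : E → EReal} (hu : IsLC u) {L : ℝ} (hL : 0 ≤ L)
    (hLip : LipBound u L) :
    ∃ uk : ℕ → E → EReal, (∀ k, IsPA (uk k)) ∧ TauConv uk u ∧ ∀ k, LipBound (uk k) L := by
  lift L to ℝ≥0 using hL
  have := FiniteDimensional.proper_real E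
  obtain ⟨a, haL, hle, hlt⟩ := hu.exists_seq_affine_le hLip
  obtain ⟨Q, hpoly, hKQ, hQ, h_int⟩ := exists_seq_isPolytope_tendsto_smallSets
    hu.convexOn_toRealFn.1 hu.nonempty_edom hu.isCompact_edom
  have hPA := fun k => isPA_extendTop_partialSups a (hpoly k) k
  have hLipk := fun k => lipBound_extendTop_partialSups (a := fun n => ⇑(a n)) (Q := Q k) (L := L)
    (fun hne => haL (Set.nonempty_iff_ne_empty.2 fun h => hne.ne_empty (h_int h k))) k
  have htau := tauConv_of_le_of_eventually_lt (M := L + 1) (fun k => (hPA k).1) hu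
    (by positivity) (fun k => (hLipk k).mono (le_add_of_nonneg_right zero_le_one))
    (fun k => extendTop_partialSups_le (hKQ k) hle k)
    fun x xk hxk c hc => eventually_lt_extendTop_partialSups hu.isCompact_edom hQ
      (fun n => (a n).continuous) hxk (hc.trans_le le_top) fun hx => hlt x hx c hc
  exact ⟨_, hPA, htau, hLipk⟩

end Approximation

/-- Every `u ∈ LC(ℝⁿ)` is the τ-limit of a sequence of piecewise affine
functions in `PA(ℝⁿ)`, whose Lipschitz constants are moreover bounded by the Lipschitz
constant of `u`. -/
theorem stmt9 (n : ℕ) (u : EuclideanSpace ℝ (Fin n) → EReal) (hu : IsLC u)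
    (L : ℝ) (hL : 0 < L) (hLip : LipBound u L) :
    ∃ uk : ℕ → EuclideanSpace ℝ (Fin n) → EReal,
      (∀ k, IsPA (uk k)) ∧ TauConv uk u ∧ ∀ k, LipBound (uk k) L :=
  stmt9_general hu hL.le hLip

end
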